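/- arXiv:1801.00925 — 2 statements merged into one kernel-verified Lean document; each statement's English description precedes it below -/
import Mathlib

section
/- Let M, N be positive integers with N ≥ 24M, let s > 2²⁴, and let φ₁, …, φ_N : (0,∞) → (0,∞) be measurable functions such that ∑_{j=1}^N φ_j(t) ≤ 2π for every t > 0 (e.g. φ_j(t) is the angular measure of S(0,t) ∩ E_j for pairwise disjoint domains E_j). Then at least N − 12M indices j satisfy both ∫_{4√s}^{s/4} π/(t φ_j(t)) dt > M log s and ∫_{4s}^{s²/4} π/(t φ_j(t)) dt > M log s. -/
open Real MeasureTheory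

/-!
If `n` of the functions `φ_j` have small integrals `∫ π / (t φ_j) dt`, the Cauchy–Schwarz
inequality `n² ≤ (∑ φ_j) (∑ 1 / φ_j) ≤ 2π ∑ 1 / φ_j`, integrated against `π dt / t`, bounds `n`
by twice the largest of these integrals divided by the logarithmic length `∫ dt / t` of the
interval. Both intervals have logarithmic length at least `(log s) / 3`, so each excludes at most
`6M` indices.
-/

open scoped ENNReal NNReal Finset

section CauchySchwarz

variable {ι α : Type*}

theorem card_sq_div_sum_le_sum_inv (B : Finset ι) (x : ι → ℝ≥0∞) :
    (#B : ℝ≥0∞) ^ 2 / ∑ j ∈ B, x j ≤ ∑ j ∈ B, (x j)⁻¹ := by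
  by_cases hzero : ∃ j ∈ B, x j = 0
  · obtain ⟨j, hj, hxj⟩ := hzero
    exact le_top.trans_eq (ENNReal.sum_eq_top.2 ⟨j, hj, ENNReal.inv_eq_top.2 hxj⟩).symm
  by_cases htop : ∃ j ∈ B, x j = ∞
  · rw [ENNReal.sum_eq_top.2 htop, ENNReal.div_top]
    exact zero_le
  push Not at hzero htop
  rcases B.eq_empty_or_nonempty with rfl | hB
  · simp
  have hpos : ∀ j ∈ B, 0 < (x j).toNNReal :=
    fun j hj ↦ ENNReal.toNNReal_pos (hzero j hj) (htop j hj)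
  have hsum : ∑ j ∈ B, x j = ↑(∑ j ∈ B, (x j).toNNReal) := by
    rw [← ENNReal.toNNReal_sum htop, ENNReal.coe_toNNReal (ENNReal.sum_ne_top.2 htop)]
  have hinv : ∑ j ∈ B, (x j)⁻¹ = ↑(∑ j ∈ B, (x j).toNNReal⁻¹) := by
    rw [ENNReal.ofNNReal_finsetSum]
    refine Finset.sum_congr rfl fun j hj ↦ ?_
    rw [ENNReal.coe_inv (hpos j hj).ne', ENNReal.coe_toNNReal (htop j hj)]
  have hcs := Finset.sq_sum_div_le_sum_sq_div B (fun _ ↦ (1 : ℝ≥0)) hpos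
  simp only [Finset.sum_const, nsmul_eq_mul, mul_one, one_pow, one_div] at hcs
  rw [hsum, hinv, ← ENNReal.coe_natCast, ← ENNReal.coe_pow,
    ← ENNReal.coe_div (Finset.sum_pos hpos hB).ne']
  exact ENNReal.coe_le_coe.2 hcs

variable [MeasurableSpace α] {μ : Measure α} {B : Finset ι}
  {f : ι → α → ℝ≥0∞} {K C : ℝ≥0∞}

theorem card_sq_div_mul_measure_univ_le_sum_lintegral_inv
    (hf : ∀ j ∈ B, AEMeasurable (f j) μ) (hsum : ∀ᵐ x ∂μ, ∑ j ∈ B, f j x ≤ K) :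
    (#B : ℝ≥0∞) ^ 2 / K * μ Set.univ ≤ ∑ j ∈ B, ∫⁻ x, (f j x)⁻¹ ∂μ :=
  calc (#B : ℝ≥0∞) ^ 2 / K * μ Set.univ
      = ∫⁻ _, (#B : ℝ≥0∞) ^ 2 / K ∂μ := (lintegral_const _).symm
    _ ≤ ∫⁻ x, ∑ j ∈ B, (f j x)⁻¹ ∂μ := by
        refine lintegral_mono_ae ?_
        filter_upwards [hsum] with x hx
        exact (ENNReal.div_le_div_left hx _).trans (card_sq_div_sum_le_sum_inv B (f · x))
    _ = ∑ j ∈ B, ∫⁻ x, (f j x)⁻¹ ∂μ := lintegral_finsetSum' B fun j hj ↦ (hf j hj).inv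

theorem card_div_mul_measure_univ_le_of_lintegral_inv_le
    (hf : ∀ j ∈ B, AEMeasurable (f j) μ) (hsum : ∀ᵐ x ∂μ, ∑ j ∈ B, f j x ≤ K)
    (hC : ∀ j ∈ B, ∫⁻ x, (f j x)⁻¹ ∂μ ≤ C) :
    (#B : ℝ≥0∞) / K * μ Set.univ ≤ C := by
  rcases B.eq_empty_or_nonempty with rfl | hB
  · simp
  have hcard : (#B : ℝ≥0∞) ≠ 0 := Nat.cast_ne_zero.2 hB.card_ne_zero
  refine (ENNReal.mul_le_mul_iff_right hcard (ENNReal.natCast_ne_top _)).1 ?_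
  calc (#B : ℝ≥0∞) * (#B / K * μ Set.univ)
      = (#B : ℝ≥0∞) ^ 2 / K * μ Set.univ := by simp only [div_eq_mul_inv]; ring
    _ ≤ ∑ j ∈ B, ∫⁻ x, (f j x)⁻¹ ∂μ :=
        card_sq_div_mul_measure_univ_le_sum_lintegral_inv hf hsum
    _ ≤ #B * C := (Finset.sum_le_card_nsmul B _ C hC).trans_eq (nsmul_eq_mul _ _)

end CauchySchwarz

section LogarithmicMeasure

variable {a b : ℝ}

theorem lintegral_Icc_const_div {c : ℝ} (hc : 0 ≤ c) (ha : 0 < a) (hb : 0 < b) :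
    ∫⁻ t in Set.Icc a b, ENNReal.ofReal (c / t) = ENNReal.ofReal (c * log (b / a)) := by
  rcases lt_or_ge b a with hba | hab
  · have hlog : log (b / a) ≤ 0 := log_nonpos (by positivity) ((div_le_one ha).2 hba.le)
    rw [Set.Icc_eq_empty hba.not_ge, setLIntegral_empty,
      ENNReal.ofReal_of_nonpos (mul_nonpos_of_nonneg_of_nonpos hc hlog)]
  have hpos : ∀ t ∈ Set.Icc a b, 0 < t := fun t ht ↦ ha.trans_le ht.1
  have hint : IntegrableOn (fun t ↦ c / t) (Set.Icc a b) :=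
    (continuousOn_const.div continuousOn_id fun t ht ↦ (hpos t ht).ne').integrableOn_Icc
  have hnonneg : 0 ≤ᵐ[volume.restrict (Set.Icc a b)] fun t ↦ c / t := by
    filter_upwards [ae_restrict_mem measurableSet_Icc] with t ht
    exact div_nonneg hc (hpos t ht).le
  rw [← ofReal_integral_eq_lintegral_ofReal hint hnonneg, integral_Icc_eq_integral_Ioc,
    ← intervalIntegral.integral_of_le hab]
  simp only [div_eq_mul_inv c, intervalIntegral.integral_const_mul, integral_inv_of_pos ha hb]

theorem card_div_mul_log_le_of_lintegral_Icc_le {ι : Type*} {B : Finset ι} {φ : ι → ℝ → ℝ}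
    {c C K : ℝ} (ha : 0 < a) (hb : 0 < b) (hc : 0 ≤ c) (hC : 0 ≤ C) (hK : 0 < K)
    (hmeas : ∀ j ∈ B, AEMeasurable (φ j) (volume.restrict (Set.Icc a b)))
    (hpos : ∀ j ∈ B, ∀ t ∈ Set.Icc a b, 0 < φ j t)
    (hsum : ∀ t ∈ Set.Icc a b, ∑ j ∈ B, φ j t ≤ K)
    (hB : ∀ j ∈ B, ∫⁻ t in Set.Icc a b, ENNReal.ofReal (c / (t * φ j t)) ≤ ENNReal.ofReal C) :
    #B / K * (c * log (b / a)) ≤ C := by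
  let w : ℝ → ℝ≥0∞ := fun t ↦ ENNReal.ofReal (c / t)
  let μ : Measure ℝ := (volume.restrict (Set.Icc a b)).withDensity w
  have hw : Measurable w := by fun_prop
  have hμ : μ ≪ volume.restrict (Set.Icc a b) := withDensity_absolutelyContinuous _ _
  have hf : ∀ j ∈ B, AEMeasurable (fun t ↦ ENNReal.ofReal (φ j t)) μ :=
    fun j hj ↦ ((hmeas j hj).mono_ac hμ).ennreal_ofReal
  have hfsum : ∀ᵐ t ∂μ, ∑ j ∈ B, ENNReal.ofReal (φ j t) ≤ ENNReal.ofReal K := by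
    filter_upwards [hμ.ae_le (ae_restrict_mem measurableSet_Icc)] with t ht
    rw [← ENNReal.ofReal_sum_of_nonneg fun j hj ↦ (hpos j hj t ht).le]
    exact ENNReal.ofReal_le_ofReal (hsum t ht)
  have hfB : ∀ j ∈ B, ∫⁻ t, (ENNReal.ofReal (φ j t))⁻¹ ∂μ ≤ ENNReal.ofReal C := by
    intro j hj
    refine (lintegral_withDensity_eq_lintegral_mul₀' hw.aemeasurable (hf j hj).inv).trans_le ?_
    refine (setLIntegral_congr_fun measurableSet_Icc fun t ht ↦ ?_).trans_le (hB j hj)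
    have ht0 : 0 < t := ha.trans_le ht.1
    simp only [Pi.mul_apply, Pi.inv_apply, w]
    rw [← ENNReal.ofReal_inv_of_pos (hpos j hj t ht), ← ENNReal.ofReal_mul (by positivity),
      ← div_eq_mul_inv, div_div]
  have hμuniv : μ Set.univ = ENNReal.ofReal (c * log (b / a)) := by
    rw [withDensity_apply _ .univ, Measure.restrict_univ, lintegral_Icc_const_div hc ha hb]
  have hcard := card_div_mul_measure_univ_le_of_lintegral_inv_le hf hfsum hfB
  rwa [hμuniv, ← ENNReal.ofReal_natCast, ← ENNReal.ofReal_div_of_pos hK,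
    ← ENNReal.ofReal_mul (by positivity), ENNReal.ofReal_le_ofReal_iff hC] at hcard

end LogarithmicMeasure

theorem log_le_three_mul_log_sqrt_div {s : ℝ} (hs : 2 ^ 24 ≤ s) :
    log s ≤ 3 * log (√s / 16) := by
  have hs0 : 0 < s := lt_of_lt_of_le (by norm_num) hs
  have hlog : 24 * log 2 ≤ log s := by
    simpa only [log_pow, Nat.cast_ofNat] using log_le_log (by norm_num) hs
  have hlog16 : log 16 = 4 * log 2 := by
    rw [show (16 : ℝ) = 2 ^ 4 by norm_num, log_pow, Nat.cast_ofNat]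
  rw [log_div (sqrt_pos.2 hs0).ne' (by norm_num), log_sqrt hs0.le, hlog16]
  linarith

section ExceptionalIndices

variable {ι : Type*} [Fintype ι] {φ : ι → ℝ → ℝ} {M : ℝ}

theorem exists_card_le_forall_notMem_lt_lintegral {a b L : ℝ} (hM : 0 ≤ M) (hL : 0 < L)
    (ha : 0 < a) (hb : 0 < b) (hlog : L ≤ 3 * log (b / a))
    (hmeas : ∀ j, AEMeasurable (φ j) (volume.restrict (Set.Icc a b)))
    (hpos : ∀ j, ∀ t ∈ Set.Icc a b, 0 < φ j t)
    (hsum : ∀ t ∈ Set.Icc a b, ∑ j, φ j t ≤ 2 * π) :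
    ∃ B : Finset ι, #B ≤ 6 * M ∧ ∀ j ∉ B, ENNReal.ofReal (M * L) <
      ∫⁻ t in Set.Icc a b, ENNReal.ofReal (π / (t * φ j t)) := by
  classical
  let B : Finset ι := {j | ∫⁻ t in Set.Icc a b, ENNReal.ofReal (π / (t * φ j t)) ≤
    ENNReal.ofReal (M * L)}
  refine ⟨B, ?_, fun j hj ↦ not_le.1 fun hle ↦ hj (by simpa [B] using hle)⟩
  have hBsum : ∀ t ∈ Set.Icc a b, ∑ j ∈ B, φ j t ≤ 2 * π := fun t ht ↦
    (Finset.sum_le_univ_sum_of_nonneg fun j ↦ (hpos j t ht).le).trans (hsum t ht)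
  have hcard : #B / (2 * π) * (π * log (b / a)) ≤ M * L :=
    card_div_mul_log_le_of_lintegral_Icc_le ha hb pi_pos.le (by positivity) two_pi_pos
      (fun j _ ↦ hmeas j) (fun j _ ↦ hpos j) hBsum fun j hj ↦ by simpa [B] using hj
  refine le_of_mul_le_mul_right ?_ hL
  calc #B * L ≤ #B * (3 * log (b / a)) := by gcongr
    _ = 6 * (#B / (2 * π) * (π * log (b / a))) := by field_simp; ring
    _ ≤ 6 * (M * L) := by gcongr
    _ = 6 * M * L := by ring

theorem stmt_4_general {s : ℝ} (hM : 0 ≤ M) (hs : 2 ^ 24 ≤ s)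
    (hmeas : ∀ j, AEMeasurable (φ j) (volume.restrict (Set.Ioi 0)))
    (hpos : ∀ j, ∀ t > 0, 0 < φ j t) (hsum : ∀ t > 0, ∑ j, φ j t ≤ 2 * π) :
    ∃ J : Finset ι, Fintype.card ι - 12 * M ≤ #J ∧ ∀ j ∈ J,
      (ENNReal.ofReal (M * log s) <
        ∫⁻ t in Set.Icc (4 * √s) (s / 4), ENNReal.ofReal (π / (t * φ j t))) ∧
      (ENNReal.ofReal (M * log s) <
        ∫⁻ t in Set.Icc (4 * s) (s ^ 2 / 4), ENNReal.ofReal (π / (t * φ j t))) := by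
  classical
  have hs1 : 1 < s := lt_of_lt_of_le (by norm_num) hs
  have hs0 : 0 < s := one_pos.trans hs1
  have hexc {a b : ℝ} (ha : 0 < a) (hb : 0 < b) (hab : √s / 16 ≤ b / a) :=
    exists_card_le_forall_notMem_lt_lintegral hM (log_pos hs1) ha hb
      ((log_le_three_mul_log_sqrt_div hs).trans (by gcongr))
      (fun j ↦ (hmeas j).mono_set fun t ht ↦ ha.trans_le ht.1)
      (fun j t ht ↦ hpos j t (ha.trans_le ht.1)) (fun t ht ↦ hsum t (ha.trans_le ht.1))
  have hsqrt : √s ^ 2 = s := sq_sqrt hs0.le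
  have hratio₁ : √s / 16 ≤ s / 4 / (4 * √s) := by
    refine le_of_eq ?_
    field_simp
    linarith
  have hratio₂ : √s / 16 ≤ s ^ 2 / 4 / (4 * s) := by
    calc √s / 16 ≤ s / 16 := by gcongr; exact sqrt_le_self_iff.2 (.inr hs1.le)
      _ = s ^ 2 / 4 / (4 * s) := by field_simp; norm_num
  obtain ⟨B₁, hB₁, hgood₁⟩ := hexc (by positivity) (by positivity) hratio₁
  obtain ⟨B₂, hB₂, hgood₂⟩ := hexc (by positivity) (by positivity) hratio₂
  refine ⟨(B₁ ∪ B₂)ᶜ, ?_, fun j hj ↦ ?_⟩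
  · have hunion : (#(B₁ ∪ B₂) : ℝ) ≤ #B₁ + #B₂ := mod_cast Finset.card_union_le B₁ B₂
    have hcompl : (#(B₁ ∪ B₂) : ℝ) + #(B₁ ∪ B₂)ᶜ = Fintype.card ι :=
      mod_cast Finset.card_add_card_compl (B₁ ∪ B₂)
    linarith
  · simp only [Finset.mem_compl, Finset.mem_union, not_or] at hj
    exact ⟨hgood₁ j hj.1, hgood₂ j hj.2⟩

end ExceptionalIndices

/-- At least `N - 12M` of the `φ_j` satisfy both logarithmic-area integral
lower bounds. -/
theorem stmt_4 (M N : ℕ) (hM : 0 < M) (hN : 24 * M ≤ N)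
    (s : ℝ) (hs : 2 ^ 24 < s)
    (φ : Fin N → ℝ → ℝ) (hmeas : ∀ j, Measurable (φ j))
    (hpos : ∀ j, ∀ t > (0:ℝ), 0 < φ j t)
    (hsum : ∀ t > (0:ℝ), ∑ j, φ j t ≤ 2 * Real.pi) :
    ∃ J : Finset (Fin N), N - 12 * M ≤ J.card ∧ ∀ j ∈ J,
      (ENNReal.ofReal ((M : ℝ) * Real.log s) <
        ∫⁻ t in Set.Icc (4 * Real.sqrt s) (s / 4),
          ENNReal.ofReal (Real.pi / (t * φ j t))) ∧
      (ENNReal.ofReal ((M : ℝ) * Real.log s) <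
        ∫⁻ t in Set.Icc (4 * s) (s ^ 2 / 4),
          ENNReal.ofReal (Real.pi / (t * φ j t))) := by
  obtain ⟨J, hcard, hJ⟩ := stmt_4_general M.cast_nonneg hs.le
    (fun j ↦ (hmeas j).aemeasurable) hpos hsum
  rw [Fintype.card_fin, sub_le_iff_le_add] at hcard
  exact ⟨J, Nat.sub_le_iff_le_add.2 (mod_cast hcard), hJ⟩
end

section
/- Let h map a domain U ⊆ ℂ conformally onto the unit disc D(0,1) with inverse F. For each k ≥ 1 there exists a constant d_k > 0 (depending only on k) and an analytic function V_k on D(0,1) such that h^(k)(F(w)) · F'(w)^k = V_k(w) and |V_k(w)| ≤ d_k / (1 − |w|)^{k−1} for all w ∈ D(0,1). Moreover V₁ ≡ 1 and the functions satisfy the recursion V_{k+1}(w) = V_k'(w) − k V_k(w) F''(w)/F'(w). -/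
open Metric Set

/-!
The chain rule gives the recursion for `V k = (h^(k) ∘ F) * F' ^ k`. Once `F'' / F'` is known to be
at most `C / (1 - |w|)`, Cauchy's estimate on the disc of radius `(1 - |w|) / 2` about `w` shows
that each step of the recursion costs one more factor `1 - |w|` in the denominator.

The bound on `F'' / F'` comes from Koebe's square root trick. Let `f` be univalent on the disc with
centre `c` and radius `r`, let `a` be a value omitted by `f` which is nearest to `f c`, and put
`ρ = |a - f c|`. A square root `g` of `f - a` cannot take both values `v` and `-v`; as `f` covers
the disc of radius `ρ` about `f c`, `g` covers a disc about `g c`, hence omits a disc about `-g c`.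
Therefore `1 / (g + g c)` is bounded, and `f - f c = O(ρ)` near `c`, so that `f''(c) = O(ρ / r²)`.
On the other hand `ρ ≤ r |f'(c)|`, by the Schwarz lemma for the inverse of `f`.
-/

open Filter Topology

section Univalent

variable {f h : ℂ → ℂ} {s : Set ℂ} {c z : ℂ} {r : ℝ}

theorem not_eventually_eq_of_injOn {𝕜 β : Type*} [NontriviallyNormedField 𝕜] {f : 𝕜 → β}
    {s : Set 𝕜} {z : 𝕜} (hf : InjOn f s) (hs : s ∈ 𝓝 z) : ¬ ∀ᶠ w in 𝓝 z, f w = f z := by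
  intro hconst
  have heq : ∀ᶠ w in 𝓝[≠] z, w = z := by
    filter_upwards [nhdsWithin_le_nhds hconst, nhdsWithin_le_nhds hs] with w hw hws
      using hf hws (mem_of_mem_nhds hs) hw
  obtain ⟨w, hw, hne⟩ := (heq.and self_mem_nhdsWithin).exists
  exact hne hw

theorem isOpen_image_of_injOn (hs : IsOpen s) (hf : DifferentiableOn ℂ f s) (hinj : InjOn f s) :
    IsOpen (f '' s) := by
  rw [isOpen_iff_mem_nhds]
  rintro _ ⟨z, hz, rfl⟩
  have hsz := hs.mem_nhds hz
  exact (hf.analyticAt hsz).eventually_constant_or_nhds_le_map_nhds.resolve_left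
    (not_eventually_eq_of_injOn hinj hsz) (image_mem_map hsz)

theorem eventually_deriv_ne_zero_of_injOn (hs : IsOpen s) (hf : DifferentiableOn ℂ f s)
    (hinj : InjOn f s) (hz : z ∈ s) : ∀ᶠ w in 𝓝[≠] z, deriv f w ≠ 0 := by
  have hsz := hs.mem_nhds hz
  refine (hf.analyticAt hsz).deriv.eventually_eq_zero_or_eventually_ne_zero.resolve_left
    fun hzero ↦ not_eventually_eq_of_injOn hinj hsz ?_
  obtain ⟨ε, hε, hball⟩ := Metric.eventually_nhds_iff_ball.1 (hzero.and hsz)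
  filter_upwards [ball_mem_nhds z hε] with w hw
  exact isOpen_ball.is_const_of_deriv_eq_zero (convex_ball z ε).isPreconnected
    (hf.mono fun v hv ↦ (hball v hv).2) (fun v hv ↦ (hball v hv).1) hw (mem_ball_self hε)

theorem continuousOn_image_of_leftInvOn (hs : IsOpen s) (hf : DifferentiableOn ℂ f s)
    (hh : LeftInvOn h f s) : ContinuousOn h (f '' s) := by
  refine (continuousOn_open_iff (isOpen_image_of_injOn hs hf hh.injOn)).2 fun t ht ↦ ?_
  rw [inter_comm, ← hh.image_inter']
  exact isOpen_image_of_injOn (ht.inter hs) (hf.mono inter_subset_right)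
    (hh.injOn.mono inter_subset_right)

theorem differentiableOn_image_of_leftInvOn (hs : IsOpen s) (hf : DifferentiableOn ℂ f s)
    (hh : LeftInvOn h f s) : DifferentiableOn ℂ h (f '' s) := by
  have hfs : IsOpen (f '' s) := isOpen_image_of_injOn hs hf hh.injOn
  have hcont : ∀ y ∈ f '' s, ContinuousAt h y := fun y hy ↦
    (continuousOn_image_of_leftInvOn hs hf hh).continuousAt (hfs.mem_nhds hy)
  have hfh : ∀ y ∈ f '' s, f (h y) = y := forall_mem_image.2 fun z hz ↦ by rw [hh hz]
  rintro _ ⟨z, hz, rfl⟩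
  have hfz : f '' s ∈ 𝓝 (f z) := hfs.mem_nhds (mem_image_of_mem f hz)
  -- Zeros of `f'` are isolated, so `h` could fail to be differentiable only at isolated points,
  -- and these are removable because `h` is continuous.
  have hne : ∀ᶠ y in 𝓝[≠] f z, deriv f (h y) ≠ 0 := by
    have htendsto : Tendsto h (𝓝[≠] f z) (𝓝[≠] z) := by
      refine tendsto_nhdsWithin_iff.2 ⟨?_, ?_⟩
      · simpa only [hh hz] using
          (hcont _ (mem_image_of_mem f hz)).tendsto.mono_left nhdsWithin_le_nhds
      · filter_upwards [nhdsWithin_le_nhds hfz, self_mem_nhdsWithin] with y hy hyz hyeq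
        exact hyz (by rw [← hfh y hy, mem_singleton_iff.1 hyeq]; rfl)
    exact htendsto.eventually (eventually_deriv_ne_zero_of_injOn hs hf hh.injOn hz)
  refine (Complex.analyticAt_of_differentiable_on_punctured_nhds_of_continuousAt ?_
    (hcont _ (mem_image_of_mem f hz))).differentiableAt.differentiableWithinAt
  filter_upwards [hne, nhdsWithin_le_nhds hfz] with y hy hys
  have hhy : h y ∈ s := by
    obtain ⟨v, hv, rfl⟩ := hys
    rwa [hh hv]
  exact (HasDerivAt.of_local_left_inverse (hcont y hys)
    (hf.differentiableAt (hs.mem_nhds hhy)).hasDerivAt hy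
    (mem_of_superset (hfs.mem_nhds hys) hfh)).differentiableAt

theorem deriv_mul_deriv_eq_one_of_leftInvOn (hs : IsOpen s) (hf : DifferentiableOn ℂ f s)
    (hh : LeftInvOn h f s) (hz : z ∈ s) : deriv h (f z) * deriv f z = 1 := by
  have hsz := hs.mem_nhds hz
  have hfz : f '' s ∈ 𝓝 (f z) :=
    (isOpen_image_of_injOn hs hf hh.injOn).mem_nhds (mem_image_of_mem f hz)
  have hcomp : HasDerivAt (h ∘ f) (deriv h (f z) * deriv f z) z :=
    ((differentiableOn_image_of_leftInvOn hs hf hh).differentiableAt hfz).hasDerivAt.comp z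
      (hf.differentiableAt hsz).hasDerivAt
  exact hcomp.unique ((hasDerivAt_id z).congr_of_eventuallyEq (mem_of_superset hsz hh))

theorem deriv_ne_zero_of_injOn (hs : IsOpen s) (hf : DifferentiableOn ℂ f s) (hinj : InjOn f s)
    (hz : z ∈ s) : deriv f z ≠ 0 :=
  right_ne_zero_of_mul_eq_one
    (deriv_mul_deriv_eq_one_of_leftInvOn hs hf hinj.leftInvOn_invFunOn hz)

theorem image_ne_univ_of_injOn_of_isBounded (hs : IsOpen s) (hsb : Bornology.IsBounded s)
    (hf : DifferentiableOn ℂ f s) (hinj : InjOn f s) : f '' s ≠ univ := by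
  intro huniv
  have hdiff : Differentiable ℂ (Function.invFunOn f s) := by
    rw [← differentiableOn_univ, ← huniv]
    exact differentiableOn_image_of_leftInvOn hs hf hinj.leftInvOn_invFunOn
  have hmem : ∀ y, y ∈ f '' s := eq_univ_iff_forall.1 huniv
  have hbdd : Bornology.IsBounded (range (Function.invFunOn f s)) :=
    hsb.subset (range_subset_iff.2 fun y ↦ Function.invFunOn_mem (hmem y))
  have hconst := hdiff.apply_eq_apply_of_bounded hbdd 0 1
  exact zero_ne_one <| by
    rw [← Function.invFunOn_eq (hmem 0), hconst, Function.invFunOn_eq (hmem 1)]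

theorem infDist_compl_image_ball_le (hr : 0 < r) (hf : DifferentiableOn ℂ f (ball c r))
    (hinj : InjOn f (ball c r)) : infDist (f c) (f '' ball c r)ᶜ ≤ r * ‖deriv f c‖ := by
  set ρ := infDist (f c) (f '' ball c r)ᶜ
  have hρ : 0 ≤ ρ := infDist_nonneg
  rcases hρ.eq_or_lt with hρ | hρ
  · rw [← hρ]
    positivity
  set h := Function.invFunOn f (ball c r)
  have hh : LeftInvOn h f (ball c r) := hinj.leftInvOn_invFunOn
  have hsub : ball (f c) ρ ⊆ f '' ball c r := ball_infDist_compl_subset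
  have hmaps : MapsTo h (ball (f c) ρ) (closedBall (h (f c)) r) := by
    rw [hh (mem_ball_self hr)]
    exact fun y hy ↦ ball_subset_closedBall (Function.invFunOn_mem (hsub hy))
  have hschwarz : ‖deriv h (f c)‖ ≤ r / ρ := Complex.norm_deriv_le_div_of_mapsTo_ball
    ((differentiableOn_image_of_leftInvOn isOpen_ball hf hh).mono hsub) hmaps hρ
  have hinv : ‖deriv h (f c)‖ * ‖deriv f c‖ = 1 := by
    rw [← norm_mul, deriv_mul_deriv_eq_one_of_leftInvOn isOpen_ball hf hh (mem_ball_self hr),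
      norm_one]
  calc ρ = ρ * (‖deriv h (f c)‖ * ‖deriv f c‖) := by rw [hinv, mul_one]
    _ ≤ ρ * (r / ρ * ‖deriv f c‖) := by gcongr
    _ = r * ‖deriv f c‖ := by field_simp

end Univalent

section SquareRoot

variable {f g : ℂ → ℂ} {s : Set ℂ} {c p z : ℂ} {r ε : ℝ}

theorem exists_differentiableOn_pow_eq (hs : IsOpen s) (hsc : IsSimplyConnected s)
    (hf : DifferentiableOn ℂ f s) (hf0 : ∀ z ∈ s, f z ≠ 0) {n : ℕ} (hn : n ≠ 0) :
    ∃ g : ℂ → ℂ, DifferentiableOn ℂ g s ∧ ∀ z, g z ^ n = f z := by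
  obtain ⟨g, hg, hgf⟩ := Complex.exists_continuousOn_pow_eq hsc hs hf.continuousOn
    (fun ⟨z, hz, hz0⟩ ↦ hf0 z hz hz0) hn
  refine ⟨g, fun z hz ↦ ?_, hgf⟩
  have hgz : g z ≠ 0 := fun h0 ↦ hf0 z hz (by rw [← hgf, h0, zero_pow hn])
  exact (HasDerivAt.of_comp_left (hg.continuousAt (hs.mem_nhds hz)) (hasDerivAt_pow n (g z))
    (hf.differentiableAt (hs.mem_nhds hz)).hasDerivAt
    (mul_ne_zero (Nat.cast_ne_zero.2 hn) (pow_ne_zero _ hgz))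
    (.of_forall hgf)).differentiableAt.differentiableWithinAt

theorem disjoint_neg_image_of_injOn_sq {α : Type*} {g : α → ℂ} {s : Set α} {t : Set ℂ}
    (hg : IsOpen (g '' s)) (hg0 : ∀ x ∈ s, g x ≠ 0) (hinj : InjOn (fun x ↦ g x ^ 2) s)
    (ht : IsPreconnected t) (htg : (t ∩ g '' s).Nonempty)
    (hsq : MapsTo (fun v ↦ v ^ 2) t ((fun x ↦ g x ^ 2) '' s)) : Disjoint t (-(g '' s)) := by
  have hdisj : Disjoint (g '' s) (-(g '' s)) := by
    refine disjoint_left.2 ?_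
    rintro _ ⟨x, hx, rfl⟩ ⟨y, hy, hyx⟩
    obtain rfl : y = x := hinj hy hx (by simp only [hyx, neg_sq])
    exact hg0 y hy (self_eq_neg.1 hyx)
  refine hdisj.mono_left (ht.subset_left_of_subset_union hg hg.neg hdisj (fun v hv ↦ ?_) htg)
  obtain ⟨x, hx, hxv⟩ := hsq hv
  exact (sq_eq_sq_iff_eq_or_eq_neg.1 hxv).imp (fun h ↦ ⟨x, hx, h⟩) fun h ↦ ⟨x, hx, h⟩

theorem norm_div_three_le_norm_add_of_injOn_sq (hr : 0 < r) (hg : DifferentiableOn ℂ g (ball c r))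
    (hg0 : ∀ z ∈ ball c r, g z ≠ 0) (hinj : InjOn (fun z ↦ g z ^ 2) (ball c r))
    (hsub : ball (g c ^ 2) (‖g c‖ ^ 2) ⊆ (fun z ↦ g z ^ 2) '' ball c r) (hz : z ∈ ball c r) :
    ‖g c‖ / 3 ≤ ‖g z + g c‖ := by
  have hc : c ∈ ball c r := mem_ball_self hr
  have hgc : 0 < ‖g c‖ := norm_pos_iff.2 (hg0 c hc)
  have hsq : MapsTo (fun v ↦ v ^ 2) (ball (g c) (‖g c‖ / 3)) (ball (g c ^ 2) (‖g c‖ ^ 2)) := by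
    intro v hv
    rw [mem_ball_iff_norm] at hv ⊢
    have hadd : ‖v + g c‖ ≤ 7 / 3 * ‖g c‖ := by
      calc ‖v + g c‖ = ‖(v - g c) + 2 * g c‖ := by ring_nf
        _ ≤ ‖v - g c‖ + 2 * ‖g c‖ := by simpa using norm_add_le (v - g c) (2 * g c)
        _ ≤ 7 / 3 * ‖g c‖ := by linarith
    calc ‖v ^ 2 - g c ^ 2‖ = ‖v + g c‖ * ‖v - g c‖ := by rw [sq_sub_sq, norm_mul]
      _ ≤ 7 / 3 * ‖g c‖ * (‖g c‖ / 3) := by gcongr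
      _ < ‖g c‖ ^ 2 := by nlinarith
  have hginj : InjOn g (ball c r) := fun x hx y hy hxy ↦ hinj hx hy (by simp only [hxy])
  have hdisj := disjoint_neg_image_of_injOn_sq (isOpen_image_of_injOn isOpen_ball hg hginj) hg0
    hinj (convex_ball (g c) (‖g c‖ / 3)).isPreconnected
    ⟨g c, mem_ball_self (by positivity), mem_image_of_mem g hc⟩ (hsq.mono_right hsub)
  by_contra! hlt
  have hmem : -g z ∈ ball (g c) (‖g c‖ / 3) := by
    rwa [mem_ball_iff_norm', sub_neg_eq_add, add_comm]
  exact disjoint_left.1 hdisj hmem (neg_mem_neg.2 (mem_image_of_mem g hz))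

theorem norm_sub_le_two_mul_of_forall_le_norm_sub (hε : 0 < ε)
    (hg : DifferentiableOn ℂ g (ball c r)) (hgp : ∀ z ∈ ball c r, ε ≤ ‖g z - p‖)
    (hz : z ∈ ball c r) (hzc : 4 * ‖g c - p‖ * dist z c ≤ ε * r) :
    ‖g z - p‖ ≤ 2 * ‖g c - p‖ := by
  have hr : 0 < r := pos_of_mem_ball hz
  have hc : c ∈ ball c r := mem_ball_self hr
  have hpos : ∀ z ∈ ball c r, 0 < ‖g z - p‖ := fun z hz ↦ hε.trans_le (hgp z hz)
  have hdiff : DifferentiableOn ℂ (fun z ↦ (g z - p)⁻¹) (ball c r) :=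
    (hg.sub_const p).inv fun z hz ↦ norm_pos_iff.1 (hpos z hz)
  have hle : ∀ z ∈ ball c r, ‖(g z - p)⁻¹‖ ≤ ε⁻¹ := fun z hz ↦ by
    rw [norm_inv]
    gcongr
    exact hgp z hz
  have hmaps : MapsTo (fun z ↦ (g z - p)⁻¹) (ball c r) (closedBall (g c - p)⁻¹ (ε⁻¹ + ε⁻¹)) :=
    fun z hz ↦ mem_closedBall_iff_norm.2 <|
      (norm_sub_le _ _).trans (add_le_add (hle z hz) (hle c hc))
  have hdist : ‖(g z - p)⁻¹ - (g c - p)⁻¹‖ ≤ (2 * ‖g c - p‖)⁻¹ := by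
    have hM := hpos c hc
    calc ‖(g z - p)⁻¹ - (g c - p)⁻¹‖ ≤ (ε⁻¹ + ε⁻¹) / r * dist z c := by
          simpa only [dist_eq_norm] using Complex.dist_le_div_mul_dist_of_mapsTo_ball hdiff hmaps hz
      _ = 4 * ‖g c - p‖ * dist z c / (ε * r) * (2 * ‖g c - p‖)⁻¹ := by field_simp; ring
      _ ≤ 1 * (2 * ‖g c - p‖)⁻¹ := by
          gcongr
          exact div_le_one_of_le₀ hzc (by positivity)
      _ = (2 * ‖g c - p‖)⁻¹ := one_mul _
  have hlow : (2 * ‖g c - p‖)⁻¹ ≤ ‖g z - p‖⁻¹ := by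
    have htri := norm_sub_norm_le (g c - p)⁻¹ (g z - p)⁻¹
    rw [norm_sub_rev, norm_inv, norm_inv] at htri
    rw [mul_inv] at hdist ⊢
    linarith
  exact (inv_le_inv₀ (by linarith [hpos c hc]) (hpos z hz)).1 hlow

theorem norm_sq_sub_sq_le_of_injOn_sq (hr : 0 < r) (hg : DifferentiableOn ℂ g (ball c r))
    (hg0 : ∀ z ∈ ball c r, g z ≠ 0) (hinj : InjOn (fun z ↦ g z ^ 2) (ball c r))
    (hsub : ball (g c ^ 2) (‖g c‖ ^ 2) ⊆ (fun z ↦ g z ^ 2) '' ball c r)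
    (hz : z ∈ closedBall c (r / 24)) : ‖g z ^ 2 - g c ^ 2‖ ≤ 24 * ‖g c‖ ^ 2 := by
  have hzr : z ∈ ball c r := closedBall_subset_ball (by linarith) hz
  have hgc : 0 < ‖g c‖ := norm_pos_iff.2 (hg0 c (mem_ball_self hr))
  have h2gc : ‖g c + g c‖ = 2 * ‖g c‖ := by simp [← two_mul]
  have hadd : ‖g z + g c‖ ≤ 4 * ‖g c‖ := by
    have hbound := norm_sub_le_two_mul_of_forall_le_norm_sub (p := -g c) (z := z)
      (ε := ‖g c‖ / 3) (by positivity) hg (fun z hz ↦ by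
        simpa only [sub_neg_eq_add] using
          norm_div_three_le_norm_add_of_injOn_sq hr hg hg0 hinj hsub hz) hzr
    simp only [sub_neg_eq_add, h2gc] at hbound
    refine (hbound ?_).trans_eq (by ring)
    nlinarith [mem_closedBall.1 hz]
  have hdiff : ‖g z - g c‖ ≤ 6 * ‖g c‖ := by
    calc ‖g z - g c‖ = ‖(g z + g c) - (g c + g c)‖ := by congr 1; ring
      _ ≤ ‖g z + g c‖ + ‖g c + g c‖ := norm_sub_le _ _
      _ ≤ 6 * ‖g c‖ := by linarith
  calc ‖g z ^ 2 - g c ^ 2‖ = ‖g z + g c‖ * ‖g z - g c‖ := by rw [sq_sub_sq, norm_mul]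
    _ ≤ 4 * ‖g c‖ * (6 * ‖g c‖) := by gcongr
    _ = 24 * ‖g c‖ ^ 2 := by ring

end SquareRoot

section Distortion

variable {f : ℂ → ℂ} {c w z : ℂ} {r : ℝ}

theorem norm_sub_le_mul_infDist_compl_image_ball (hr : 0 < r)
    (hf : DifferentiableOn ℂ f (ball c r)) (hinj : InjOn f (ball c r))
    (hz : z ∈ closedBall c (r / 24)) :
    ‖f z - f c‖ ≤ 24 * infDist (f c) (f '' ball c r)ᶜ := by
  obtain ⟨a, ha, hca⟩ :=
    (isOpen_image_of_injOn isOpen_ball hf hinj).isClosed_compl.exists_infDist_eq_dist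
      (nonempty_compl.2 (image_ne_univ_of_injOn_of_isBounded isOpen_ball isBounded_ball hf hinj))
      (f c)
  have hfa : ∀ z ∈ ball c r, f z - a ≠ 0 := fun z hz h0 ↦ ha ⟨z, hz, sub_eq_zero.1 h0⟩
  have := (convex_ball c r).contractibleSpace (nonempty_ball.2 hr)
  obtain ⟨g, hg, hgf⟩ := exists_differentiableOn_pow_eq (s := ball c r) isOpen_ball
    (inferInstanceAs (SimplyConnectedSpace _)) (hf.sub_const a) hfa two_ne_zero
  have hg0 : ∀ z ∈ ball c r, g z ≠ 0 := fun z hz h0 ↦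
    hfa z hz (by rw [← hgf, h0, zero_pow two_ne_zero])
  have hρ : infDist (f c) (f '' ball c r)ᶜ = ‖g c‖ ^ 2 := by
    rw [hca, dist_eq_norm, ← norm_pow, hgf]
  have hginj : InjOn (fun z ↦ g z ^ 2) (ball c r) := by
    simpa only [hgf, InjOn, sub_left_inj] using hinj
  have hcover : ball (g c ^ 2) (‖g c‖ ^ 2) ⊆ (fun z ↦ g z ^ 2) '' ball c r := by
    intro v hv
    rw [← hρ, hgf, mem_ball_iff_norm, sub_sub_eq_add_sub, ← mem_ball_iff_norm] at hv
    obtain ⟨x, hx, hxv⟩ := ball_infDist_compl_subset hv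
    exact ⟨x, hx, by simp only [hgf, hxv, add_sub_cancel_right]⟩
  calc ‖f z - f c‖ = ‖g z ^ 2 - g c ^ 2‖ := by rw [hgf, hgf, sub_sub_sub_cancel_right]
    _ ≤ 24 * ‖g c‖ ^ 2 := norm_sq_sub_sq_le_of_injOn_sq hr hg hg0 hginj hcover hz
    _ = 24 * infDist (f c) (f '' ball c r)ᶜ := by rw [hρ]

-- The constant `27648 = 2! * 24 * 24 ^ 2` is far from the sharp value `4`.
theorem mul_norm_deriv_deriv_le_of_injOn (hr : 0 < r) (hf : DifferentiableOn ℂ f (ball c r))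
    (hinj : InjOn f (ball c r)) : r * ‖deriv (deriv f) c‖ ≤ 27648 * ‖deriv f c‖ := by
  have hcauchy := Complex.norm_iteratedDeriv_le_of_forall_mem_sphere_norm_le
    (f := fun z ↦ f z - f c) 2 (by positivity : 0 < r / 24)
    ((hf.sub_const (f c)).diffContOnCl_ball (closedBall_subset_ball (by linarith)))
    fun z hz ↦ norm_sub_le_mul_infDist_compl_image_ball hr hf hinj (sphere_subset_closedBall hz)
  rw [iteratedDeriv_succ', iteratedDeriv_one, deriv_sub_const_fun] at hcauchy
  calc r * ‖deriv (deriv f) c‖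
      ≤ r * ((2 : ℕ).factorial * (24 * infDist (f c) (f '' ball c r)ᶜ) / (r / 24) ^ 2) := by gcongr
    _ ≤ r * ((2 : ℕ).factorial * (24 * (r * ‖deriv f c‖)) / (r / 24) ^ 2) := by
        gcongr
        exact infDist_compl_image_ball_le hr hf hinj
    _ = 27648 * ‖deriv f c‖ := by
        rw [Nat.factorial_two]
        field_simp
        norm_num [mul_comm]

theorem norm_deriv_deriv_div_deriv_le_of_injOn (hf : DifferentiableOn ℂ f (ball c r))
    (hinj : InjOn f (ball c r)) (hw : w ∈ ball c r) :
    ‖deriv (deriv f) w / deriv f w‖ ≤ 27648 / (r - dist w c) := by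
  have hr : 0 < r - dist w c := sub_pos.2 hw
  have hsub : ball w (r - dist w c) ⊆ ball c r := ball_subset_ball' (by linarith)
  rw [norm_div, div_le_div_iff₀
    (norm_pos_iff.2 (deriv_ne_zero_of_injOn isOpen_ball hf hinj hw)) hr, mul_comm]
  exact mul_norm_deriv_deriv_le_of_injOn hr (hf.mono hsub) (hinj.mono hsub)

theorem norm_deriv_le_of_norm_le_div_pow {E : Type*} [NormedAddCommGroup E] [NormedSpace ℂ E]
    {f : ℂ → E} {A : ℝ} {n : ℕ} (hf : DifferentiableOn ℂ f (ball c r))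
    (hA : ∀ z ∈ ball c r, ‖f z‖ ≤ A / (r - dist z c) ^ n) (hw : w ∈ ball c r) :
    ‖deriv f w‖ ≤ 2 ^ (n + 1) * A / (r - dist w c) ^ (n + 1) := by
  set δ := r - dist w c with hδ
  have hδ0 : 0 < δ := sub_pos.2 hw
  have hA0 : 0 ≤ A := by
    have := (norm_nonneg _).trans (hA w hw)
    rwa [← hδ, le_div_iff₀ (by positivity), zero_mul] at this
  have hdist : ∀ z ∈ closedBall w (δ / 2), δ / 2 ≤ r - dist z c := fun z hz ↦ by
    linarith [dist_triangle z w c, mem_closedBall.1 hz]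
  have hsub : closedBall w (δ / 2) ⊆ ball c r := fun z hz ↦ by
    rw [mem_ball]
    linarith [hdist z hz]
  calc ‖deriv f w‖ ≤ A / (δ / 2) ^ n / (δ / 2) := by
        refine Complex.norm_deriv_le_of_forall_mem_sphere_norm_le (by positivity)
          (hf.diffContOnCl_ball hsub) fun z hz ↦ ?_
        have hz' := sphere_subset_closedBall hz
        refine (hA z (hsub hz')).trans ?_
        gcongr
        exact hdist z hz'
    _ = 2 ^ (n + 1) * A / δ ^ (n + 1) := by
        rw [div_pow]
        field_simp
        ring

end Distortion

/-- The functions `V k` with `(h^(k) ∘ F) * F' ^ k = V k` for a left inverse `h` of `F`, defined by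
their recursion. It starts at `V 0 = id`, which expresses `h ∘ F = id` and yields `V 1 = 1`. -/
noncomputable def inverseDerivSeq {𝕜 : Type*} [NontriviallyNormedField 𝕜] (F : 𝕜 → 𝕜) :
    ℕ → 𝕜 → 𝕜
  | 0 => id
  | k + 1 => fun w ↦ deriv (inverseDerivSeq F k) w
      - (k : 𝕜) * inverseDerivSeq F k w * (deriv (deriv F) w / deriv F w)

section inverseDerivSeq

variable {𝕜 : Type*} [NontriviallyNormedField 𝕜]

theorem inverseDerivSeq_one (F : 𝕜 → 𝕜) (w : 𝕜) : inverseDerivSeq F 1 w = 1 := by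
  simp [inverseDerivSeq]

variable [CompleteSpace 𝕜] {h F : 𝕜 → 𝕜} {s : Set 𝕜}

theorem analyticOnNhd_inverseDerivSeq (hF : AnalyticOnNhd 𝕜 F s)
    (hF' : ∀ w ∈ s, deriv F w ≠ 0) (k : ℕ) : AnalyticOnNhd 𝕜 (inverseDerivSeq F k) s := by
  induction k with
  | zero => exact analyticOnNhd_id
  | succ k ih =>
    exact ih.deriv.sub ((analyticOnNhd_const.mul ih).mul (hF.deriv.deriv.div hF.deriv hF'))

theorem iteratedDeriv_mul_deriv_pow_eq_inverseDerivSeq (hs : IsOpen s)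
    (hh : AnalyticOnNhd 𝕜 h (F '' s)) (hF : AnalyticOnNhd 𝕜 F s) (hF' : ∀ w ∈ s, deriv F w ≠ 0)
    (hhF : LeftInvOn h F s) (k : ℕ) :
    ∀ w ∈ s, iteratedDeriv k h (F w) * deriv F w ^ k = inverseDerivSeq F k w := by
  induction k with
  | zero => exact fun w hw ↦ by simpa [inverseDerivSeq] using hhF hw
  | succ k ih =>
    intro w hw
    have hcomp : HasDerivAt (fun z ↦ iteratedDeriv k h (F z))
        (iteratedDeriv (k + 1) h (F w) * deriv F w) w := by
      have hk := hh.iterated_deriv k (F w) (mem_image_of_mem F hw)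
      rw [← iteratedDeriv_eq_iterate] at hk
      rw [iteratedDeriv_succ]
      exact hk.differentiableAt.hasDerivAt.comp w (hF w hw).differentiableAt.hasDerivAt
    have hpow : HasDerivAt (fun z ↦ deriv F z ^ k)
        (k * deriv F w ^ (k - 1) * deriv (deriv F) w) w :=
      (hF.deriv w hw).differentiableAt.hasDerivAt.pow k
    have hderiv := ((hcomp.mul hpow).congr_of_eventuallyEq
      (mem_of_superset (hs.mem_nhds hw) fun z hz ↦ (ih z hz).symm)).deriv
    have hne := hF' w hw
    simp only [inverseDerivSeq]
    rw [hderiv, ← ih w hw]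
    rcases k with _ | k
    · simp
    · rw [Nat.add_sub_cancel]
      field_simp
      ring

theorem norm_inverseDerivSeq_succ_le {F : ℂ → ℂ} {c : ℂ} {r C : ℝ} (hC : 0 ≤ C)
    (hF : AnalyticOnNhd ℂ F (ball c r)) (hF' : ∀ w ∈ ball c r, deriv F w ≠ 0)
    (hFC : ∀ w ∈ ball c r, ‖deriv (deriv F) w / deriv F w‖ ≤ C / (r - dist w c)) (k : ℕ) :
    ∀ w ∈ ball c r, ‖inverseDerivSeq F (k + 1) w‖ ≤
      (∏ i ∈ Finset.range k, (2 ^ (i + 1) + (i + 1) * C)) / (r - dist w c) ^ k := by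
  induction k with
  | zero => simp [inverseDerivSeq_one]
  | succ k ih =>
    intro w hw
    have hr : 0 < r - dist w c := sub_pos.2 hw
    have hderiv := norm_deriv_le_of_norm_le_div_pow
      (analyticOnNhd_inverseDerivSeq hF hF' (k + 1)).differentiableOn ih hw
    have hcast : ‖((k + 1 : ℕ) : ℂ)‖ = k + 1 := by
      rw [Complex.norm_natCast, Nat.cast_succ]
    rw [inverseDerivSeq, Finset.prod_range_succ]
    set P := ∏ i ∈ Finset.range k, (2 ^ (i + 1) + ((i : ℝ) + 1) * C)
    have : 0 ≤ P := by positivity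
    calc ‖deriv (inverseDerivSeq F (k + 1)) w
          - ((k + 1 : ℕ) : ℂ) * inverseDerivSeq F (k + 1) w * (deriv (deriv F) w / deriv F w)‖
        ≤ ‖deriv (inverseDerivSeq F (k + 1)) w‖
          + (k + 1) * ‖inverseDerivSeq F (k + 1) w‖ * ‖deriv (deriv F) w / deriv F w‖ := by
          simpa only [norm_mul, hcast] using norm_sub_le (deriv (inverseDerivSeq F (k + 1)) w)
            (((k + 1 : ℕ) : ℂ) * inverseDerivSeq F (k + 1) w * (deriv (deriv F) w / deriv F w))
      _ ≤ 2 ^ (k + 1) * P / (r - dist w c) ^ (k + 1)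
          + (k + 1) * (P / (r - dist w c) ^ k) * (C / (r - dist w c)) := by
          gcongr
          · exact ih w hw
          · exact hFC w hw
      _ = P * (2 ^ (k + 1) + (k + 1) * C) / (r - dist w c) ^ (k + 1) := by
          field_simp
          ring

end inverseDerivSeq

/-- Derivative estimates for conformal maps onto the unit disc: there are
constants `d k` depending only on `k` such that for any conformal map `h`
of a domain `U` onto the unit disc with inverse `F`, there are analytic
functions `V k` with `h^(k)(F w) F'(w)^k = V k w`,
`|V k w| ≤ d k / (1-|w|)^(k-1)`, `V 1 ≡ 1`, and the recursion
`V (k+1) = (V k)' - k · (V k) · F''/F'`. -/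
theorem stmt_6 :
    ∃ d : ℕ → ℝ, (∀ k, 1 ≤ k → 0 < d k) ∧
      ∀ (U : Set ℂ) (h F : ℂ → ℂ), IsOpen U →
        AnalyticOnNhd ℂ h U → AnalyticOnNhd ℂ F (ball (0:ℂ) 1) →
        Set.MapsTo h U (ball (0:ℂ) 1) → Set.MapsTo F (ball (0:ℂ) 1) U →
        (∀ z ∈ U, F (h z) = z) → (∀ w ∈ ball (0:ℂ) 1, h (F w) = w) →
        ∃ V : ℕ → ℂ → ℂ,
          (∀ k, 1 ≤ k → AnalyticOnNhd ℂ (V k) (ball (0:ℂ) 1)) ∧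
          (∀ k, 1 ≤ k → ∀ w ∈ ball (0:ℂ) 1,
            iteratedDeriv k h (F w) * (deriv F w) ^ k = V k w ∧
            ‖V k w‖ ≤ d k / (1 - ‖w‖) ^ (k - 1)) ∧
          (∀ w, V 1 w = 1) ∧
          (∀ k, 1 ≤ k → ∀ w ∈ ball (0:ℂ) 1,
            V (k + 1) w = deriv (V k) w
              - (k : ℂ) * V k w * (deriv (deriv F) w / deriv F w)) := by
  refine ⟨fun k ↦ ∏ i ∈ Finset.range (k - 1), (2 ^ (i + 1) + ((i : ℝ) + 1) * 27648),
    fun k _ ↦ by positivity, fun U h F _ hh hF _ hFU _ hhF ↦ ?_⟩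
  have hhF' : LeftInvOn h F (ball 0 1) := hhF
  have hF' : ∀ w ∈ ball (0 : ℂ) 1, deriv F w ≠ 0 := fun w hw ↦
    deriv_ne_zero_of_injOn isOpen_ball hF.differentiableOn hhF'.injOn hw
  refine ⟨inverseDerivSeq F, fun k _ ↦ analyticOnNhd_inverseDerivSeq hF hF' k,
    fun k hk w hw ↦ ⟨?_, ?_⟩, inverseDerivSeq_one F, fun k _ w _ ↦ rfl⟩
  · exact iteratedDeriv_mul_deriv_pow_eq_inverseDerivSeq isOpen_ball
      (hh.mono hFU.image_subset) hF hF' hhF' k w hw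
  · obtain ⟨k, rfl⟩ := Nat.exists_eq_add_of_le' hk
    simpa only [dist_zero_right, Nat.add_sub_cancel] using
      norm_inverseDerivSeq_succ_le (by norm_num) hF hF'
        (fun w ↦ norm_deriv_deriv_div_deriv_le_of_injOn hF.differentiableOn hhF'.injOn) k w hw
end
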